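/- arXiv:2111.09721 — 2 statements merged into one kernel-verified Lean document; each statement's English description precedes it below -/
import Mathlib

section
/- Assume Conditions 10 and 12 hold. Then there is a constant C_R < ∞ such that for every n ∈ ℕ, sup_{θ∈Θ} ρ₁(R_{n,θ}) ≤ C_R, where ρ₁ denotes the largest singular value. -/
open MeasureTheory ProbabilityTheory Set Matrix

noncomputable section

/-- `ℝ^p` with the Euclidean norm. -/
abbrev Euc (p : ℕ) := EuclideanSpace ℝ (Fin p)

/-- Build a Euclidean vector from a plain function. -/
def toEuc {p : ℕ} (v : Fin p → ℝ) : Euc p := (WithLp.equiv 2 (Fin p → ℝ)).symm v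

/-- The standard Gaussian distribution on `ℝ^p`. -/
def stdGaussian (p : ℕ) : Measure (Euc p) :=
  (Measure.pi fun _ : Fin p => gaussianReal 0 1).map (toEuc (p := p))

/-- The `L¹` Wasserstein distance between two distributions on `ℝ^p`
(dual formulation: supremum over `1`-Lipschitz test functions). -/
def W1 {p : ℕ} (P Q : Measure (Euc p)) : ℝ :=
  sSup { r | ∃ f : Euc p → ℝ, LipschitzWith 1 f ∧
    r = |(∫ x, f x ∂P) - (∫ x, f x ∂Q)| }

/-- Partial derivative in the `i`-th coordinate direction. -/
def pder {p : ℕ} (i : Fin p) (f : Euc p → ℝ) (θ : Euc p) : ℝ :=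
  fderiv ℝ f θ (EuclideanSpace.single i 1)

/-- The gradient as a Euclidean vector. -/
def gradVec {p : ℕ} (f : Euc p → ℝ) (θ : Euc p) : Euc p := toEuc fun i => pder i f θ

/-- The correlation matrix `R_{n,θ}` with entries `k_θ(x_i − x_j)`. -/
def Rmat {d p : ℕ} (x : ℕ → Euc d) (kern : Euc p → Euc d → ℝ) (n : ℕ) (θ : Euc p) :
    Matrix (Fin n) (Fin n) ℝ :=
  Matrix.of fun i j => kern θ (x i - x j)

/-- `diag(M)`: set the off-diagonal entries of `M` to zero. -/
def diagPart {n : ℕ} (A : Matrix (Fin n) (Fin n) ℝ) : Matrix (Fin n) (Fin n) ℝ :=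
  Matrix.diagonal A.diag

/-- The leave-one-out cross-validation criterion
`M_n(θ) = (1/n) yᵀ R_{n,θ}⁻¹ diag(R_{n,θ}⁻¹)⁻² R_{n,θ}⁻¹ y`. -/
def CVcrit {d p : ℕ} (x : ℕ → Euc d) (kern : Euc p → Euc d → ℝ) (n : ℕ)
    (y : Fin n → ℝ) (θ : Euc p) : ℝ :=
  (1 / n) *
    (y ⬝ᵥ ((Rmat x kern n θ)⁻¹ * ((diagPart ((Rmat x kern n θ)⁻¹))⁻¹) ^ 2 *
      (Rmat x kern n θ)⁻¹).mulVec y)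

/-- `opBound A C` means that the largest singular value of `A` is at most `C`. -/
def opBound {n : ℕ} (A : Matrix (Fin n) (Fin n) ℝ) (C : ℝ) : Prop :=
  ∀ v : Fin n → ℝ,
    Real.sqrt (∑ i, A.mulVec v i ^ 2) ≤ C * Real.sqrt (∑ i, v i ^ 2)

lemma aux_rowsum {d : ℕ} (x : ℕ → Euc d) (cx : ℝ) (hcx : 0 < cx)
    (hmindist : ∀ i j : ℕ, i ≠ j → cx ≤ ‖x i - x j‖) (r : ℝ) (hr : (d : ℝ) < r) :
    ∃ S : ℝ, 0 ≤ S ∧ ∀ (n : ℕ) (z : Euc d), ∑ j : Fin n, (1 + ‖z - x j‖) ^ (-r) ≤ S := by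
  have hr0 : 0 < r := lt_of_le_of_lt (Nat.cast_nonneg d) hr
  have hint : Integrable (fun y : Euc d => (1 + ‖y‖) ^ (-r)) volume :=
    integrable_one_add_norm (by simpa using hr)
  set I := ∫ y : Euc d, (1 + ‖y‖) ^ (-r) with hI
  set V := (volume : Measure (Euc d)).real (Metric.ball 0 (cx/2)) with hV
  have hVpos : 0 < V := by
    rw [hV, measureReal_def]
    exact ENNReal.toReal_pos (Metric.measure_ball_pos _ _ (by positivity)).ne'
      measure_ball_lt_top.ne
  have hI0 : 0 ≤ I := integral_nonneg fun y => by positivity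
  set K := (1 + cx/2) ^ r with hK
  have hKpos : 0 < K := by positivity
  refine ⟨K * I / V, by positivity, fun n z => ?_⟩
  rw [le_div_iff₀ hVpos, Finset.sum_mul]
  have hdisj : Pairwise fun j k : Fin n => 
      Disjoint (Metric.ball (z - x j) (cx/2)) (Metric.ball (z - x k) (cx/2)) := by
    intro j k hjk
    apply Metric.ball_disjoint_ball
    have := hmindist k j (fun h => hjk (Fin.ext h.symm))
    rw [dist_eq_norm]
    have h2 : z - x j - (z - x k) = x k - x j := by abel
    rw [h2]; linarith
  have hterm : ∀ j : Fin n, (1 + ‖z - x j‖) ^ (-r) * V ≤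
      ∫ y in Metric.ball (z - x j) (cx/2), K * (1 + ‖y‖) ^ (-r) := by
    intro j
    have h1 : (1 + ‖z - x j‖) ^ (-r) * V =
        ∫ y in Metric.ball (z - x j) (cx/2), (1 + ‖z - x j‖) ^ (-r) := by
      rw [setIntegral_const, smul_eq_mul, mul_comm, hV, measureReal_def, measureReal_def,
        ← Measure.addHaar_ball_center volume (z - x j)]
    rw [h1]
    apply setIntegral_mono_on
    · exact integrableOn_const measure_ball_lt_top.ne
    · exact (hint.const_mul K).integrableOn
    · exact measurableSet_ball
    · intro y hy
      rw [Metric.mem_ball, dist_eq_norm] at hy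
      have h3 : ‖y‖ ≤ ‖z - x j‖ + cx/2 := by
        have := norm_add_le (y - (z - x j)) (z - x j)
        rw [sub_add_cancel] at this
        linarith
      have h4 : 1 + ‖y‖ ≤ (1 + cx/2) * (1 + ‖z - x j‖) := by
        nlinarith [norm_nonneg (z - x j)]
      have h5 := Real.rpow_le_rpow (by positivity) h4 hr0.le
      rw [Real.mul_rpow (by positivity) (by positivity)] at h5
      rw [Real.rpow_neg (by positivity), Real.rpow_neg (by positivity), ← div_eq_mul_inv,
        inv_le_iff_one_le_mul₀ (by positivity), div_mul_eq_mul_div,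
        one_le_div (by positivity)]
      exact h5
  calc _ ≤ ∑ j : Fin n, ∫ y in Metric.ball (z - x j) (cx/2), K * (1 + ‖y‖) ^ (-r) :=
        Finset.sum_le_sum fun j _ => hterm j
    _ = ∫ y in ⋃ j : Fin n, Metric.ball (z - x j) (cx/2), K * (1 + ‖y‖) ^ (-r) := by
        rw [integral_iUnion_fintype (fun _ => measurableSet_ball) hdisj
          (fun _ => (hint.const_mul K).integrableOn)]
    _ ≤ ∫ y, K * (1 + ‖y‖) ^ (-r) :=
        setIntegral_le_integral (hint.const_mul K)
          (Filter.Eventually.of_forall fun y => by simp only [Pi.zero_apply]; positivity)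
    _ = K * I := integral_const_mul _ _

lemma aux_schur {n : ℕ} (A W : Matrix (Fin n) (Fin n) ℝ) (S : ℝ) (hS : 0 ≤ S)
    (hAW : ∀ i j, |A i j| ≤ W i j) (hsym : ∀ i j, W i j = W j i)
    (hrow : ∀ i, ∑ j, W i j ≤ S) : opBound A S := by
  intro v
  have hW : ∀ i j, 0 ≤ W i j := fun i j => (abs_nonneg _).trans (hAW i j)
  have h1 : ∀ i, A.mulVec v i ^ 2 ≤ S * ∑ j, W i j * v j ^ 2 := by
    intro i
    have ha : |A.mulVec v i| ≤ ∑ j, W i j * |v j| := by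
      have hb : |A.mulVec v i| ≤ ∑ j, |A i j * v j| :=
        Finset.abs_sum_le_sum_abs (fun j => A i j * v j) Finset.univ
      refine hb.trans (Finset.sum_le_sum fun j _ => ?_)
      rw [abs_mul]
      exact mul_le_mul_of_nonneg_right (hAW i j) (abs_nonneg _)
    calc A.mulVec v i ^ 2 = |A.mulVec v i| ^ 2 := (sq_abs _).symm
      _ ≤ (∑ j, W i j * |v j|) ^ 2 := by gcongr
      _ ≤ (∑ j, W i j) * ∑ j, W i j * v j ^ 2 := by
          apply Finset.sum_sq_le_sum_mul_sum_of_sq_eq_mul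
          · intro j _; exact hW i j
          · intro j _; exact mul_nonneg (hW i j) (sq_nonneg _)
          · intro j _; rw [mul_pow, sq_abs]; ring
      _ ≤ _ := mul_le_mul_of_nonneg_right (hrow i)
          (Finset.sum_nonneg fun j _ => mul_nonneg (hW i j) (sq_nonneg _))
  have h2 : ∑ i, A.mulVec v i ^ 2 ≤ S ^ 2 * ∑ i, v i ^ 2 := by
    calc _ ≤ ∑ i, S * ∑ j, W i j * v j ^ 2 := Finset.sum_le_sum fun i _ => h1 i
      _ = S * ∑ j, (∑ i, W j i) * v j ^ 2 := by
          rw [← Finset.mul_sum, Finset.sum_comm]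
          simp_rw [Finset.sum_mul]
          congr 1
          exact Finset.sum_congr rfl fun j _ => Finset.sum_congr rfl fun i _ => by rw [hsym]
      _ ≤ S * ∑ j, S * v j ^ 2 := by
          apply mul_le_mul_of_nonneg_left _ hS
          exact Finset.sum_le_sum fun j _ => mul_le_mul_of_nonneg_right (hrow j) (sq_nonneg _)
      _ = _ := by rw [← Finset.mul_sum]; ring
  calc _ ≤ Real.sqrt (S ^ 2 * ∑ i, v i ^ 2) := Real.sqrt_le_sqrt h2
    _ = _ := by rw [Real.sqrt_mul (sq_nonneg S), Real.sqrt_sq hS]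

lemma aux_decay (t r : ℝ) (ht : 0 ≤ t) (hr : 0 ≤ r) :
    1 / (1 + t ^ r) ≤ 2 ^ r * (1 + t) ^ (-r) := by
  rw [Real.rpow_neg (by positivity), ← div_eq_mul_inv, div_le_div_iff₀ (by positivity) (by positivity), one_mul]
  have h0 : 0 ≤ t ^ r := by positivity
  have h2 : (0:ℝ) ≤ 2 ^ r := by positivity
  rcases le_total t 1 with h | h
  · calc (1 + t) ^ r ≤ 2 ^ r := Real.rpow_le_rpow (by positivity) (by linarith) hr
      _ ≤ _ := by nlinarith
  · calc (1 + t) ^ r ≤ (2 * t) ^ r := Real.rpow_le_rpow (by positivity) (by linarith) hr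
      _ = 2 ^ r * t ^ r := Real.mul_rpow (by norm_num) ht
      _ ≤ _ := by nlinarith

/-- Lemma C.1: under Conditions 10 and 12, the largest singular value of
`R_{n,θ}` is bounded uniformly in `n` and `θ ∈ Θ`. -/
theorem Rmat_singular_value_bound
    {d p : ℕ} (Θ : Set (Euc p)) (hΘcompact : IsCompact Θ)
    (x : ℕ → Euc d) (kern : Euc p → Euc d → ℝ)
    -- Condition 10 (minimal distance between observation points)
    (cx : ℝ) (hcx : 0 < cx) (hmindist : ∀ i j : ℕ, i ≠ j → cx ≤ ‖x i - x j‖)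
    -- Condition 12 (third-order smoothness in θ and decay of the correlation)
    (hsmooth : ∀ z : Euc d, ∀ θ ∈ interior Θ, ContDiffAt ℝ 3 (fun θ' => kern θ' z) θ)
    (CR2 cR2 : ℝ) (hCR2 : 0 < CR2) (hcR2 : 0 < cR2)
    (hdecay : ∀ θ ∈ Θ, ∀ z : Euc d,
      |kern θ z| ≤ CR2 / (1 + ‖z‖ ^ ((d : ℝ) + cR2)))
    (hdecay1 : ∀ θ ∈ interior Θ, ∀ (z : Euc d) (j : Fin p),
      |pder j (fun θ' => kern θ' z) θ| ≤ CR2 / (1 + ‖z‖ ^ ((d : ℝ) + cR2)))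
    (hdecay2 : ∀ θ ∈ interior Θ, ∀ (z : Euc d) (j k : Fin p),
      |pder k (pder j fun θ' => kern θ' z) θ| ≤ CR2 / (1 + ‖z‖ ^ ((d : ℝ) + cR2)))
    (hdecay3 : ∀ θ ∈ interior Θ, ∀ (z : Euc d) (j k l : Fin p),
      |pder l (pder k (pder j fun θ' => kern θ' z)) θ|
        ≤ CR2 / (1 + ‖z‖ ^ ((d : ℝ) + cR2)))
    : ∃ CR : ℝ, ∀ (n : ℕ), ∀ θ ∈ Θ, opBound (Rmat x kern n θ) CR := by
  obtain ⟨S, hS, hsum⟩ := aux_rowsum x cx hcx hmindist ((d : ℝ) + cR2) (by linarith)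
  refine ⟨CR2 * 2 ^ ((d : ℝ) + cR2) * S, fun n θ hθ => ?_⟩
  apply aux_schur _ (Matrix.of fun i j : Fin n =>
    CR2 * 2 ^ ((d : ℝ) + cR2) * (1 + ‖x i - x j‖) ^ (-((d : ℝ) + cR2))) _ (by positivity)
  · intro i j
    refine (hdecay θ hθ _).trans ?_
    have := aux_decay ‖x i - x j‖ ((d : ℝ) + cR2) (norm_nonneg _) (by positivity)
    rw [Matrix.of_apply, mul_assoc, div_eq_mul_one_div]
    exact mul_le_mul_of_nonneg_left this hCR2.le
  · intro i j
    simp only [Matrix.of_apply]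
    rw [norm_sub_rev]
  · intro i
    simp only [Matrix.of_apply]
    rw [← Finset.mul_sum]
    exact mul_le_mul_of_nonneg_left (hsum n (x i)) (by positivity)
end
end

section
/- Assume Conditions 10, 11 and 12 hold. Then there exist n×n matrices C_{n,θ,j,k} (for j,k ∈ {1,…,p}, θ ∈ int Θ, n ∈ ℕ) such that the second-order partial derivatives of the cross-validation criterion satisfy (∇²M_n(θ))_{j,k} = (1/n) y^{(n)⊤} C_{n,θ,j,k} y^{(n)}, and there is a constant C_C < ∞ such that for all n ∈ ℕ, max_{j,k=1,…,p} sup_{θ∈int Θ} ρ₁(C_{n,θ,j,k}) ≤ C_C, where ρ₁ denotes the largest singular value. -/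
open MeasureTheory ProbabilityTheory Set Matrix

noncomputable section

section Helpers
open scoped Matrix.Norms.L2Operator

lemma aux_norm_le {n : ℕ} (A : Matrix (Fin n) (Fin n) ℝ) {C : ℝ} (hC : 0 ≤ C)
    (h : opBound A C) : ‖A‖ ≤ C := by
  rw [← Matrix.l2_opNorm_toEuclideanCLM]
  refine ContinuousLinearMap.opNorm_le_bound _ hC fun v => ?_
  have := h v.ofLp
  rw [EuclideanSpace.norm_eq, EuclideanSpace.norm_eq]
  simpa using this

lemma aux_opBound {n : ℕ} (A : Matrix (Fin n) (Fin n) ℝ) {C : ℝ}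
    (h : ‖A‖ ≤ C) : opBound A C := by
  intro v
  have h1 := Matrix.l2_opNorm_mulVec A (WithLp.toLp 2 v)
  rw [EuclideanSpace.norm_eq, EuclideanSpace.norm_eq] at h1
  simp only [Real.norm_eq_abs, sq_abs] at h1
  refine le_trans h1 ?_
  gcongr

lemma aux_schur_s14 {n : ℕ} (A : Matrix (Fin n) (Fin n) ℝ) {B : ℝ} (hB : 0 ≤ B)
    (h1 : ∀ i, ∑ j, |A i j| ≤ B) (h2 : ∀ j, ∑ i, |A i j| ≤ B) : ‖A‖ ≤ B := by
  apply aux_norm_le A hB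
  intro v
  have key : ∑ i, A.mulVec v i ^ 2 ≤ B ^ 2 * ∑ i, v i ^ 2 := by
    calc ∑ i, A.mulVec v i ^ 2 ≤ ∑ i, B * ∑ j, |A i j| * v j ^ 2 := by
          refine Finset.sum_le_sum fun i _ => ?_
          have := Finset.sum_sq_le_sum_mul_sum_of_sq_le_mul Finset.univ
            (r := fun j => A i j * v j) (f := fun j => |A i j|)
            (g := fun j => |A i j| * v j ^ 2) (fun _ _ => abs_nonneg _)
            (fun _ _ => by positivity)
            (fun j _ => by rw [← mul_assoc, abs_mul_abs_self]; exact le_of_eq (by ring))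
          refine le_trans this ?_
          have h3 : 0 ≤ ∑ j, |A i j| * v j ^ 2 := Finset.sum_nonneg fun _ _ => by positivity
          exact mul_le_mul_of_nonneg_right (h1 i) h3
      _ = B * ∑ j, (∑ i, |A i j|) * v j ^ 2 := by
          rw [← Finset.mul_sum, Finset.sum_comm]
          simp_rw [Finset.sum_mul]
      _ ≤ B * ∑ j, B * v j ^ 2 := by
          gcongr with j _
          exact h2 j
      _ = _ := by rw [← Finset.mul_sum]; ring
  calc √(∑ i, A.mulVec v i ^ 2) ≤ √(B ^ 2 * ∑ i, v i ^ 2) := Real.sqrt_le_sqrt key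
    _ = _ := by rw [Real.sqrt_mul (by positivity), Real.sqrt_sq hB]

lemma aux_coercive {n : ℕ} (A : Matrix (Fin n) (Fin n) ℝ) {c : ℝ} (hc : 0 < c)
    (h : ∀ v : Fin n → ℝ, c * (∑ i, v i ^ 2) ≤ v ⬝ᵥ A.mulVec v) :
    IsUnit A ∧ ‖A⁻¹‖ ≤ 1 / c ∧ ∀ B, 0 < B → ‖A‖ ≤ B → ∀ i, c / B ^ 2 ≤ A⁻¹ i i := by
  have hu : IsUnit A := by
    rw [← Matrix.mulVec_injective_iff_isUnit]
    intro v w hvw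
    have h1 := h (v - w)
    have h2 : A.mulVec (v - w) = 0 := by
      rw [Matrix.mulVec_sub, sub_eq_zero]; exact hvw
    rw [h2, dotProduct_zero] at h1
    have h3 : ∑ i, (v - w) i ^ 2 = 0 :=
      le_antisymm (by nlinarith) (Finset.sum_nonneg fun _ _ => sq_nonneg _)
    rw [Finset.sum_eq_zero_iff_of_nonneg (fun _ _ => sq_nonneg _)] at h3
    funext i
    have := h3 i (Finset.mem_univ _)
    exact sub_eq_zero.mp (pow_eq_zero_iff (two_ne_zero) |>.mp this)
  have hdet : IsUnit A.det := (Matrix.isUnit_iff_isUnit_det A).mp hu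
  refine ⟨hu, ?_, ?_⟩
  · apply aux_norm_le _ (by positivity)
    intro v
    set w := A⁻¹.mulVec v with hw
    have hv : A.mulVec w = v := by
      rw [hw, Matrix.mulVec_mulVec, Matrix.mul_nonsing_inv _ hdet, Matrix.one_mulVec]
    have h1 := h w
    rw [hv] at h1
    have h2 : w ⬝ᵥ v ≤ √(∑ i, w i ^ 2) * √(∑ i, v i ^ 2) :=
      Real.sum_mul_le_sqrt_mul_sqrt _ _ _
    have h3 : ∑ i, w i ^ 2 = √(∑ i, w i ^ 2) ^ 2 :=
      (Real.sq_sqrt (Finset.sum_nonneg fun _ _ => sq_nonneg _)).symm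
    have h4 := Real.sqrt_nonneg (∑ i, w i ^ 2)
    have h5 := Real.sqrt_nonneg (∑ i, v i ^ 2)
    rw [h3] at h1
    set a := √(∑ i, w i ^ 2)
    set b := √(∑ i, v i ^ 2)
    rw [div_mul_eq_mul_div, one_mul, le_div_iff₀ hc]
    rcases h4.eq_or_lt with h6 | h6
    · rw [← h6]; simpa using h5
    · have : c * a ^ 2 ≤ a * b := h1.trans h2
      nlinarith
  · intro B hB hAB i
    set e : Fin n → ℝ := Pi.single i 1 with he
    set w := A⁻¹.mulVec e with hw
    have hv : A.mulVec w = e := by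
      rw [hw, Matrix.mulVec_mulVec, Matrix.mul_nonsing_inv _ hdet, Matrix.one_mulVec]
    have hwi : w ⬝ᵥ e = A⁻¹ i i := by
      simp [hw, he]
    have h1 := h w
    rw [hv, hwi] at h1
    have h2 := aux_opBound A hAB w
    rw [hv] at h2
    have h3 : ∑ k, e k ^ 2 = 1 := by
      simp [he, Pi.single_apply]
    rw [h3, Real.sqrt_one] at h2
    have h4 : 1 ≤ B ^ 2 * ∑ i, w i ^ 2 := by
      have h5 : (∑ i, w i ^ 2) = √(∑ i, w i ^ 2) ^ 2 :=
        (Real.sq_sqrt (Finset.sum_nonneg fun _ _ => sq_nonneg _)).symm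
      rw [h5, ← mul_pow]
      exact one_le_pow₀ h2
    rw [div_le_iff₀ (by positivity)]
    nlinarith [sq_nonneg B]

/-- packing bound -/
lemma aux_pack {d : ℕ} (x : ℕ → Euc d) (cx : ℝ) (hcx : 0 < cx)
    (hmindist : ∀ i j : ℕ, i ≠ j → cx ≤ ‖x i - x j‖) (r : ℝ) (hr : (d : ℝ) < r) :
    ∃ K : ℝ, 0 ≤ K ∧ ∀ (n : ℕ) (z : Euc d),
      ∑ j : Fin n, 1 / (1 + ‖x j - z‖ ^ r) ≤ K := by
  have hr0 : 0 < r := lt_of_le_of_lt (Nat.cast_nonneg d) hr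
  have hint : Integrable (fun u : Euc d => (1 + ‖u‖) ^ (-r)) volume :=
    integrable_one_add_norm (by simpa using hr)
  set V : ℝ := (volume : Measure (Euc d)).real (Metric.ball 0 (cx / 2)) with hV
  have hVpos : 0 < V := by
    rw [hV, measureReal_def]
    exact ENNReal.toReal_pos (Metric.measure_ball_pos _ _ (by positivity)).ne'
      measure_ball_lt_top.ne
  have hVball : ∀ a : Euc d, (volume : Measure (Euc d)).real (Metric.ball a (cx / 2)) = V := by
    intro a
    rw [hV, measureReal_def, measureReal_def, Measure.addHaar_ball_center]
  set I : ℝ := ∫ u : Euc d, (1 + ‖u‖) ^ (-r) with hI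
  have hI0 : 0 ≤ I := integral_nonneg fun u => by positivity
  refine ⟨2 ^ r * ((1 + cx / 2) ^ r * I / V), by positivity, fun n z => ?_⟩
  -- step 1
  have s1 : ∀ t : ℝ, 0 ≤ t → 1 / (1 + t ^ r) ≤ 2 ^ r * (1 + t) ^ (-r) := by
    intro t ht
    rw [Real.rpow_neg (by positivity), ← div_eq_mul_inv, div_le_div_iff₀ (by positivity)
      (by positivity), one_mul]
    have htr : 0 ≤ t ^ r := Real.rpow_nonneg ht r
    rcases le_total t 1 with h | h
    · calc (1 + t) ^ r ≤ 2 ^ r := Real.rpow_le_rpow (by positivity) (by linarith) hr0.le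
        _ ≤ _ := le_mul_of_one_le_right (by positivity) (by linarith)
    · calc (1 + t) ^ r ≤ (2 * t) ^ r := Real.rpow_le_rpow (by positivity) (by linarith) hr0.le
        _ = 2 ^ r * t ^ r := Real.mul_rpow (by norm_num) ht
        _ ≤ _ := by gcongr; linarith
  have hint2 : Integrable (fun u : Euc d => (1 + ‖u - z‖) ^ (-r)) volume :=
    hint.comp_sub_right z
  have s2 : ∀ j : Fin n, (1 + ‖x j - z‖) ^ (-r) * V ≤
      (1 + cx / 2) ^ r * ∫ u in Metric.ball (x j) (cx / 2), (1 + ‖u - z‖) ^ (-r) := by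
    intro j
    rw [← integral_const_mul, ← hVball (x j)]
    have : (1 + ‖x j - z‖) ^ (-r) * (volume : Measure (Euc d)).real (Metric.ball (x j) (cx / 2))
        = ∫ u in Metric.ball (x j) (cx / 2), (1 + ‖x j - z‖) ^ (-r) := by
      rw [setIntegral_const, smul_eq_mul, mul_comm]
    rw [this]
    refine setIntegral_mono_on ?_ ?_ measurableSet_ball ?_
    · exact integrableOn_const measure_ball_lt_top.ne
    · exact (hint2.const_mul _).integrableOn
    · intro u hu
      rw [Metric.mem_ball, dist_eq_norm] at hu
      have h1 : ‖u - z‖ ≤ ‖u - x j‖ + ‖x j - z‖ := by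
        have := norm_add_le (u - x j) (x j - z)
        rwa [sub_add_sub_cancel] at this
      rw [Real.rpow_neg (by positivity), Real.rpow_neg (by positivity), ← div_eq_mul_inv,
        inv_eq_one_div, div_le_div_iff₀ (by positivity) (by positivity), one_mul,
        ← Real.mul_rpow (by positivity) (by positivity)]
      refine Real.rpow_le_rpow (by positivity) ?_ hr0.le
      nlinarith [norm_nonneg (x j - z)]
  have s3 : ∑ j : Fin n, ∫ u in Metric.ball (x j) (cx / 2), (1 + ‖u - z‖) ^ (-r) ≤ I := by
    rw [← integral_biUnion_finset (f := fun u : Euc d => (1 + ‖u - z‖) ^ (-r)) Finset.univ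
      (s := fun j : Fin n => Metric.ball (x j) (cx / 2))
      (fun _ _ => measurableSet_ball) ?_ (fun _ _ => hint2.integrableOn)]
    · refine (setIntegral_le_integral hint2 (Filter.Eventually.of_forall fun u => ?_)).trans ?_
      · show (0 : ℝ) ≤ _
        positivity
      · rw [integral_sub_right_eq_self (fun u : Euc d => (1 + ‖u‖) ^ (-r)) z]
    · intro i _ j _ hij
      refine Metric.ball_disjoint_ball ?_
      rw [dist_eq_norm]
      have := hmindist i j (fun h => hij (Fin.ext h))
      linarith
  calc ∑ j : Fin n, 1 / (1 + ‖x j - z‖ ^ r)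
      ≤ ∑ j : Fin n, 2 ^ r * ((1 + cx / 2) ^ r *
          (∫ u in Metric.ball (x j) (cx / 2), (1 + ‖u - z‖) ^ (-r)) / V) := by
        refine Finset.sum_le_sum fun j _ => (s1 _ (norm_nonneg _)).trans ?_
        gcongr
        rw [le_div_iff₀ hVpos]
        exact s2 j
    _ = 2 ^ r * ((1 + cx / 2) ^ r *
          (∑ j : Fin n, ∫ u in Metric.ball (x j) (cx / 2), (1 + ‖u - z‖) ^ (-r)) / V) := by
        rw [← Finset.mul_sum, ← Finset.sum_div, ← Finset.mul_sum]
    _ ≤ _ := by gcongr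

/-- uniformly bounded matrix families with `m` uniformly bounded derivatives -/
def BC {p : ℕ} (U : Set (Euc p)) :
    ℕ → ((n : ℕ) → Euc p → Matrix (Fin n) (Fin n) ℝ) → Prop
  | 0, F => ∃ C : ℝ, ∀ n, ∀ θ ∈ U, ‖F n θ‖ ≤ C
  | m + 1, F => (∃ C : ℝ, ∀ n, ∀ θ ∈ U, ‖F n θ‖ ≤ C) ∧
      (∀ n, ∀ θ ∈ U, DifferentiableAt ℝ (F n) θ) ∧
      ∀ j : Fin p, BC U m (fun n θ => fderiv ℝ (F n) θ (EuclideanSpace.single j 1))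

variable {p : ℕ} {U : Set (Euc p)}

lemma BC.bdd {m : ℕ} {F : (n : ℕ) → Euc p → Matrix (Fin n) (Fin n) ℝ} (h : BC U m F) :
    ∃ C : ℝ, ∀ n, ∀ θ ∈ U, ‖F n θ‖ ≤ C := by
  cases m with
  | zero => exact h
  | succ m => exact h.1

lemma BC.down {m : ℕ} : ∀ {F : (n : ℕ) → Euc p → Matrix (Fin n) (Fin n) ℝ}, BC U (m + 1) F →
    BC U m F := by
  induction m with
  | zero => intro F h; exact h.1
  | succ m ih => intro F h; exact ⟨h.1, h.2.1, fun j => ih (h.2.2 j)⟩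

lemma BC.congr (hU : IsOpen U) {m : ℕ} :
    ∀ {F G : (n : ℕ) → Euc p → Matrix (Fin n) (Fin n) ℝ}, BC U m F →
    (∀ n, ∀ θ ∈ U, F n θ = G n θ) → BC U m G := by
  induction m with
  | zero =>
    rintro F G ⟨C, hC⟩ hFG
    exact ⟨C, fun n θ hθ => by rw [← hFG n θ hθ]; exact hC n θ hθ⟩
  | succ m ih =>
    rintro F G ⟨⟨C, hC⟩, hd, hj⟩ hFG
    have hev : ∀ n, ∀ θ ∈ U, F n =ᶠ[nhds θ] G n := fun n θ hθ => by
      filter_upwards [hU.mem_nhds hθ] with t ht using hFG n t ht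
    refine ⟨⟨C, fun n θ hθ => by rw [← hFG n θ hθ]; exact hC n θ hθ⟩,
      fun n θ hθ => (hd n θ hθ).congr_of_eventuallyEq (hev n θ hθ).symm, fun j => ?_⟩
    exact ih (hj j) fun n θ hθ => by rw [(hev n θ hθ).fderiv_eq]

lemma BC.add (hU : IsOpen U) {m : ℕ} :
    ∀ {F G : (n : ℕ) → Euc p → Matrix (Fin n) (Fin n) ℝ}, BC U m F → BC U m G →
    BC U m (fun n θ => F n θ + G n θ) := by
  induction m with
  | zero =>
    rintro F G ⟨C, hC⟩ ⟨D, hD⟩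
    exact ⟨C + D, fun n θ hθ => norm_add_le_of_le (hC n θ hθ) (hD n θ hθ)⟩
  | succ m ih =>
    rintro F G ⟨⟨C, hC⟩, hd, hj⟩ ⟨⟨D, hD⟩, hd', hj'⟩
    refine ⟨⟨C + D, fun n θ hθ => norm_add_le_of_le (hC n θ hθ) (hD n θ hθ)⟩,
      fun n θ hθ => (hd n θ hθ).add (hd' n θ hθ), fun j => ?_⟩
    refine (ih (hj j) (hj' j)).congr hU fun n θ hθ => ?_
    rw [fderiv_fun_add (hd n θ hθ) (hd' n θ hθ)]
    rfl

lemma BC.neg {m : ℕ} :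
    ∀ {F : (n : ℕ) → Euc p → Matrix (Fin n) (Fin n) ℝ}, BC U m F →
    BC U m (fun n θ => - F n θ) := by
  induction m with
  | zero =>
    rintro F ⟨C, hC⟩
    exact ⟨C, fun n θ hθ => by rw [norm_neg]; exact hC n θ hθ⟩
  | succ m ih =>
    rintro F ⟨⟨C, hC⟩, hd, hj⟩
    refine ⟨⟨C, fun n θ hθ => by rw [norm_neg]; exact hC n θ hθ⟩,
      fun n θ hθ => (hd n θ hθ).neg, fun j => ?_⟩
    have := ih (hj j)
    convert this using 3 with n θ
    rw [fderiv_fun_neg]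
    rfl

lemma BC.mul (hU : IsOpen U) {m : ℕ} :
    ∀ {F G : (n : ℕ) → Euc p → Matrix (Fin n) (Fin n) ℝ}, BC U m F → BC U m G →
    BC U m (fun n θ => F n θ * G n θ) := by
  have h0 : ∀ {F G : (n : ℕ) → Euc p → Matrix (Fin n) (Fin n) ℝ},
    (∃ C : ℝ, ∀ n, ∀ θ ∈ U, ‖F n θ‖ ≤ C) → (∃ C : ℝ, ∀ n, ∀ θ ∈ U, ‖G n θ‖ ≤ C) →
    (∃ C : ℝ, ∀ n, ∀ θ ∈ U, ‖F n θ * G n θ‖ ≤ C) := by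
    rintro F G ⟨C, hC⟩ ⟨D, hD⟩
    refine ⟨C * D, fun n θ hθ => (norm_mul_le _ _).trans ?_⟩
    exact mul_le_mul (hC n θ hθ) (hD n θ hθ) (norm_nonneg _)
      ((norm_nonneg _).trans (hC n θ hθ))
  induction m with
  | zero => intro F G hF hG; exact h0 hF hG
  | succ m ih =>
    rintro F G hF hG
    refine ⟨h0 hF.1 hG.1, fun n θ hθ => (hF.2.1 n θ hθ).mul (hG.2.1 n θ hθ), fun j => ?_⟩
    refine (BC.add hU (ih hF.down (hG.2.2 j)) (ih (hF.2.2 j) hG.down)).congr hU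
      fun n θ hθ => ?_
    have := (HasFDerivAt.mul' (hF.2.1 n θ hθ).hasFDerivAt (hG.2.1 n θ hθ).hasFDerivAt).fderiv
    have h2 : (F n * G n) = fun θ => F n θ * G n θ := rfl
    rw [h2] at this
    rw [this]
    simp

lemma BC.inv (hU : IsOpen U) {m : ℕ} 
    {F : (n : ℕ) → Euc p → Matrix (Fin n) (Fin n) ℝ} (hF : BC U m F)
    (hu : ∀ n, ∀ θ ∈ U, IsUnit (F n θ)) (hb : ∃ C : ℝ, ∀ n, ∀ θ ∈ U, ‖(F n θ)⁻¹‖ ≤ C) :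
    BC U m (fun n θ => (F n θ)⁻¹) := by
  induction m with
  | zero => exact hb
  | succ m ih =>
    have hder : ∀ n, ∀ θ ∈ U, ∃ L : Euc p →L[ℝ] Matrix (Fin n) (Fin n) ℝ,
        HasFDerivAt (fun θ => (F n θ)⁻¹) L θ ∧
        ∀ v, L v = -((F n θ)⁻¹ * fderiv ℝ (F n) θ v * (F n θ)⁻¹) := by
      intro n θ hθ
      obtain ⟨u, hu'⟩ := hu n θ hθ
      have h1 := hasFDerivAt_ringInverse (𝕜 := ℝ) u
      rw [hu'] at h1
      have h2 := h1.comp θ (hF.2.1 n θ hθ).hasFDerivAt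
      have h3 : (Ring.inverse ∘ F n) = fun θ => (F n θ)⁻¹ := by
        funext t; simp [Matrix.nonsing_inv_eq_ringInverse]
      rw [h3] at h2
      refine ⟨_, h2, fun v => ?_⟩
      have h4 : (F n θ)⁻¹ = (↑u⁻¹ : Matrix (Fin n) (Fin n) ℝ) := by
        rw [Matrix.nonsing_inv_eq_ringInverse, ← hu', Ring.inverse_unit]
      rw [h4]
      simp
    refine ⟨hb, fun n θ hθ => ?_, fun j => ?_⟩
    · obtain ⟨L, hL, -⟩ := hder n θ hθ
      exact hL.differentiableAt
    · have hi := ih hF.down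
      refine (BC.neg (BC.mul hU (BC.mul hU hi (hF.2.2 j)) hi)).congr hU fun n θ hθ => ?_
      obtain ⟨L, hL, hL'⟩ := hder n θ hθ
      rw [hL.fderiv, hL']

/-- diagonal part as a linear map -/
def diagLin (n : ℕ) : Matrix (Fin n) (Fin n) ℝ →ₗ[ℝ] Matrix (Fin n) (Fin n) ℝ where
  toFun := diagPart
  map_add' A B := by simp [diagPart, Matrix.diagonal_add]
  map_smul' c A := by simp [diagPart, Matrix.diagonal_smul]

lemma aux_entry {n : ℕ} (A : Matrix (Fin n) (Fin n) ℝ) (i : Fin n) : |A i i| ≤ ‖A‖ := by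
  have h := aux_opBound A le_rfl (Pi.single i 1)
  have h3 : ∑ k, (Pi.single i 1 : Fin n → ℝ) k ^ 2 = 1 := by
    simp [Pi.single_apply]
  rw [h3, Real.sqrt_one, mul_one] at h
  refine le_trans ?_ h
  apply Real.abs_le_sqrt
  have := Finset.single_le_sum (f := fun k => A.mulVec (Pi.single i 1) k ^ 2)
    (fun k _ => sq_nonneg _) (Finset.mem_univ i)
  simpa using this

lemma aux_diag {n : ℕ} (A : Matrix (Fin n) (Fin n) ℝ) : ‖diagPart A‖ ≤ ‖A‖ := by
  rw [diagPart, Matrix.l2_opNorm_diagonal]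
  rw [pi_norm_le_iff_of_nonneg (norm_nonneg _)]
  exact fun i => aux_entry A i

lemma BC.diag (hU : IsOpen U) {m : ℕ} :
    ∀ {F : (n : ℕ) → Euc p → Matrix (Fin n) (Fin n) ℝ}, BC U m F →
    BC U m (fun n θ => diagPart (F n θ)) := by
  have h0 : ∀ {F : (n : ℕ) → Euc p → Matrix (Fin n) (Fin n) ℝ},
    (∃ C : ℝ, ∀ n, ∀ θ ∈ U, ‖F n θ‖ ≤ C) →
    (∃ C : ℝ, ∀ n, ∀ θ ∈ U, ‖diagPart (F n θ)‖ ≤ C) := by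
    rintro F ⟨C, hC⟩
    exact ⟨C, fun n θ hθ => (aux_diag _).trans (hC n θ hθ)⟩
  induction m with
  | zero => intro F h; exact h0 h
  | succ m ih =>
    intro F h
    have hd : ∀ n, ∀ θ ∈ U, HasFDerivAt (fun θ => diagPart (F n θ))
        ((LinearMap.toContinuousLinearMap (diagLin n)).comp (fderiv ℝ (F n) θ)) θ := by
      intro n θ hθ
      exact (LinearMap.toContinuousLinearMap (diagLin n)).hasFDerivAt.comp θ
        (h.2.1 n θ hθ).hasFDerivAt
    refine ⟨h0 h.1, fun n θ hθ => (hd n θ hθ).differentiableAt, fun j => ?_⟩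
    refine (ih (h.2.2 j)).congr hU fun n θ hθ => ?_
    rw [(hd n θ hθ).fderiv]
    rfl

lemma aux_Rmat_deriv {d n : ℕ} (x : ℕ → Euc d) (kern : Euc p → Euc d → ℝ) (θ : Euc p)
    (h : ∀ z, DifferentiableAt ℝ (fun θ' => kern θ' z) θ) :
    DifferentiableAt ℝ (Rmat x kern n) θ ∧ ∀ j : Fin p,
      fderiv ℝ (Rmat x kern n) θ (EuclideanSpace.single j 1) =
        Rmat x (fun θ z => pder j (fun θ' => kern θ' z) θ) n θ := by
  have hs : Rmat x kern n = fun θ => ∑ i : Fin n, ∑ j : Fin n,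
      kern θ (x i - x j) • Matrix.single i j (1 : ℝ) := by
    funext θ
    conv_lhs => rw [Matrix.matrix_eq_sum_single (Rmat x kern n θ)]
    simp [Rmat, Matrix.smul_single]
  have hd : HasFDerivAt (Rmat x kern n) (∑ i : Fin n, ∑ j : Fin n,
      (fderiv ℝ (fun θ' => kern θ' (x i - x j)) θ).smulRight (Matrix.single i j (1 : ℝ))) θ := by
    rw [hs]
    refine HasFDerivAt.fun_sum fun i _ => HasFDerivAt.fun_sum fun j _ => ?_
    exact (h _).hasFDerivAt.smul_const _
  refine ⟨hd.differentiableAt, fun j => ?_⟩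
  rw [hd.fderiv]
  conv_rhs => rw [Matrix.matrix_eq_sum_single (Rmat x _ n θ)]
  simp [Rmat, Matrix.smul_single, pder]

lemma aux_Rmat_bdd {d : ℕ} (x : ℕ → Euc d) (cx : ℝ) (hcx : 0 < cx)
    (hmindist : ∀ i j : ℕ, i ≠ j → cx ≤ ‖x i - x j‖) (CR2 cR2 : ℝ) (hCR2 : 0 < CR2)
    (hcR2 : 0 < cR2) : ∃ B : ℝ, ∀ (kern : Euc p → Euc d → ℝ) (θ : Euc p), 
      (∀ z : Euc d, |kern θ z| ≤ CR2 / (1 + ‖z‖ ^ ((d : ℝ) + cR2))) →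
      ∀ n, ‖Rmat x kern n θ‖ ≤ B := by
  obtain ⟨K, hK, hp⟩ := aux_pack x cx hcx hmindist ((d : ℝ) + cR2) (by linarith)
  refine ⟨CR2 * K, fun kern θ hk n => ?_⟩
  apply aux_schur_s14 _ (by positivity)
  · intro i
    refine le_trans ?_ (mul_le_mul_of_nonneg_left (hp n (x i)) hCR2.le)
    rw [Finset.mul_sum]
    refine Finset.sum_le_sum fun j _ => ?_
    rw [mul_one_div, norm_sub_rev]
    exact hk _
  · intro j
    refine le_trans ?_ (mul_le_mul_of_nonneg_left (hp n (x j)) hCR2.le)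
    rw [Finset.mul_sum]
    refine Finset.sum_le_sum fun i _ => ?_
    rw [mul_one_div]
    exact hk _

/-- the quadratic form functional -/
def quadLin {n : ℕ} (y : Fin n → ℝ) : Matrix (Fin n) (Fin n) ℝ →ₗ[ℝ] ℝ where
  toFun A := (1 / n) * (y ⬝ᵥ A.mulVec y)
  map_add' A B := by simp [Matrix.add_mulVec, mul_add]
  map_smul' c A := by simp [Matrix.smul_mulVec]; ring

lemma aux_pder {n : ℕ} (y : Fin n → ℝ) (G : Euc p → Matrix (Fin n) (Fin n) ℝ) (θ : Euc p)
    (h : DifferentiableAt ℝ G θ) (j : Fin p) :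
    pder j (fun θ => quadLin y (G θ)) θ =
      quadLin y (fderiv ℝ G θ (EuclideanSpace.single j 1)) := by
  have := (LinearMap.toContinuousLinearMap (quadLin y)).hasFDerivAt.comp θ h.hasFDerivAt
  have h2 : (LinearMap.toContinuousLinearMap (quadLin y)) ∘ G = fun θ => quadLin y (G θ) := rfl
  rw [h2] at this
  rw [pder, this.fderiv]
  rfl

lemma aux_pder_diff (f : Euc p → ℝ) (θ : Euc p) (m : ℕ) (h : ContDiffAt ℝ (m + 1 : ℕ) f θ)
    (j : Fin p) : ContDiffAt ℝ m (pder j f) θ := by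
  have h1 : ContDiffAt ℝ m (fderiv ℝ f) θ := h.fderiv_right (by norm_cast)
  exact h1.clm_apply contDiffAt_const

lemma aux_main (hU : IsOpen U) (G : (n : ℕ) → Euc p → Matrix (Fin n) (Fin n) ℝ) (hG : BC U 2 G) :
    ∃ Cmat : (n : ℕ) → Euc p → Fin p → Fin p → Matrix (Fin n) (Fin n) ℝ,
      (∀ (n : ℕ), ∀ θ ∈ U, ∀ (j k : Fin p) (y : Fin n → ℝ),
        pder k (pder j (fun θ => (1 / n) * (y ⬝ᵥ (G n θ).mulVec y))) θ
          = (1 / n) * (y ⬝ᵥ (Cmat n θ j k).mulVec y)) ∧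
      ∃ CC : ℝ, ∀ (n : ℕ), ∀ θ ∈ U, ∀ j k : Fin p,
        opBound (Cmat n θ j k) CC := by
  refine ⟨fun n θ j k => fderiv ℝ (fun θ => fderiv ℝ (G n) θ (EuclideanSpace.single j 1)) θ
    (EuclideanSpace.single k 1), ?_, ?_⟩
  · intro n θ hθ j k y
    have h1 : pder j (fun θ => quadLin y (G n θ)) =ᶠ[nhds θ]
        fun θ => quadLin y (fderiv ℝ (G n) θ (EuclideanSpace.single j 1)) := by
      filter_upwards [hU.mem_nhds hθ] with t ht
      exact aux_pder y (G n) t (hG.2.1 n t ht) j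
    have h2 := aux_pder y (fun θ => fderiv ℝ (G n) θ (EuclideanSpace.single j 1)) θ
      ((hG.2.2 j).2.1 n θ hθ) k
    have h3 : pder k (pder j (fun θ => quadLin y (G n θ))) θ =
      pder k (fun θ => quadLin y (fderiv ℝ (G n) θ (EuclideanSpace.single j 1))) θ := by
      rw [pder, h1.fderiv_eq, pder]
    exact h3.trans h2
  · have h : ∀ j k : Fin p, ∃ C : ℝ, ∀ n, ∀ θ ∈ U,
      ‖fderiv ℝ (fun θ => fderiv ℝ (G n) θ (EuclideanSpace.single j 1)) θ
        (EuclideanSpace.single k 1)‖ ≤ C := fun j k => (hG.2.2 j).2.2 k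
    choose C hC using h
    refine ⟨∑ j, ∑ k, |C j k|, fun n θ hθ j k => aux_opBound _ ?_⟩
    refine (hC j k n θ hθ).trans ((le_abs_self _).trans ?_)
    refine le_trans ?_ (Finset.single_le_sum (f := fun j => ∑ k, |C j k|)
      (fun j _ => Finset.sum_nonneg fun _ _ => abs_nonneg _) (Finset.mem_univ j))
    exact Finset.single_le_sum (f := fun k => |C j k|)
      (fun _ _ => abs_nonneg _) (Finset.mem_univ k)

lemma aux_diag_inv {n : ℕ} (S : Matrix (Fin n) (Fin n) ℝ) {a : ℝ} (ha : 0 < a)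
    (h : ∀ i, a ≤ S i i) : IsUnit (diagPart S) ∧ ‖(diagPart S)⁻¹‖ ≤ 1 / a := by
  have h1 : diagPart S * Matrix.diagonal (fun i => (S i i)⁻¹) = 1 := by
    rw [diagPart, Matrix.diagonal_mul_diagonal, ← Matrix.diagonal_one]
    congr 1
    funext i
    exact mul_inv_cancel₀ (ha.trans_le (h i)).ne'
  refine ⟨IsUnit.of_mul_eq_one _ h1, ?_⟩
  rw [Matrix.inv_eq_right_inv h1, Matrix.l2_opNorm_diagonal,
    pi_norm_le_iff_of_nonneg (by positivity)]
  intro i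
  rw [norm_inv, Real.norm_of_nonneg (ha.le.trans (h i)), one_div]
  exact inv_anti₀ ha (h i)

end Helpers

/-- Lemma C.3: the second derivatives of the cross-validation criterion are
quadratic forms with uniformly bounded matrices. -/
theorem CV_hessian_formula
    {d p : ℕ} (Θ : Set (Euc p)) (hΘcompact : IsCompact Θ)
    (x : ℕ → Euc d) (kern : Euc p → Euc d → ℝ)
    -- Condition 10 (minimal distance between observation points)
    (cx : ℝ) (hcx : 0 < cx) (hmindist : ∀ i j : ℕ, i ≠ j → cx ≤ ‖x i - x j‖)
    -- Condition 11 (uniformly positive definite correlation matrices)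
    (cR1 : ℝ) (hcR1 : 0 < cR1)
    (heigR : ∀ (n : ℕ), ∀ θ ∈ Θ, ∀ v : Fin n → ℝ,
      cR1 * (∑ i, v i ^ 2) ≤ v ⬝ᵥ (Rmat x kern n θ).mulVec v)
    -- Condition 12 (third-order smoothness in θ and decay of the correlation)
    (hsmooth : ∀ z : Euc d, ∀ θ ∈ interior Θ, ContDiffAt ℝ 3 (fun θ' => kern θ' z) θ)
    (CR2 cR2 : ℝ) (hCR2 : 0 < CR2) (hcR2 : 0 < cR2)
    (hdecay : ∀ θ ∈ Θ, ∀ z : Euc d,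
      |kern θ z| ≤ CR2 / (1 + ‖z‖ ^ ((d : ℝ) + cR2)))
    (hdecay1 : ∀ θ ∈ interior Θ, ∀ (z : Euc d) (j : Fin p),
      |pder j (fun θ' => kern θ' z) θ| ≤ CR2 / (1 + ‖z‖ ^ ((d : ℝ) + cR2)))
    (hdecay2 : ∀ θ ∈ interior Θ, ∀ (z : Euc d) (j k : Fin p),
      |pder k (pder j fun θ' => kern θ' z) θ| ≤ CR2 / (1 + ‖z‖ ^ ((d : ℝ) + cR2)))
    (hdecay3 : ∀ θ ∈ interior Θ, ∀ (z : Euc d) (j k l : Fin p),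
      |pder l (pder k (pder j fun θ' => kern θ' z)) θ|
        ≤ CR2 / (1 + ‖z‖ ^ ((d : ℝ) + cR2)))
    : ∃ Cmat : (n : ℕ) → Euc p → Fin p → Fin p → Matrix (Fin n) (Fin n) ℝ,
      (∀ (n : ℕ), ∀ θ ∈ interior Θ, ∀ (j k : Fin p) (y : Fin n → ℝ),
        pder k (pder j (CVcrit x kern n y)) θ
          = (1 / n) * (y ⬝ᵥ (Cmat n θ j k).mulVec y)) ∧
      ∃ CC : ℝ, ∀ (n : ℕ), ∀ θ ∈ interior Θ, ∀ j k : Fin p,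
        opBound (Cmat n θ j k) CC := by
  have hU : IsOpen (interior Θ) := isOpen_interior
  obtain ⟨B, hB⟩ := aux_Rmat_bdd (p := p) x cx hcx hmindist CR2 cR2 hCR2 hcR2
  have hR : BC (interior Θ) 2 (fun n => Rmat x kern n) := by
    have d1 : ∀ θ ∈ interior Θ, ∀ z, DifferentiableAt ℝ (fun θ' => kern θ' z) θ :=
      fun θ hθ z => (hsmooth z θ hθ).differentiableAt (by norm_num)
    have d2 : ∀ j : Fin p, ∀ θ ∈ interior Θ, ∀ z,
        DifferentiableAt ℝ (pder j fun θ' => kern θ' z) θ :=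
      fun j θ hθ z => (aux_pder_diff _ θ 2 (hsmooth z θ hθ) j).differentiableAt (by norm_num)
    refine ⟨⟨B, fun n θ hθ => hB kern θ (hdecay θ (interior_subset hθ)) n⟩,
      fun n θ hθ => (aux_Rmat_deriv x kern θ (d1 θ hθ)).1, fun j => ?_⟩
    have hj : BC (interior Θ) 1 (fun n => Rmat x (fun θ z => pder j (fun θ' => kern θ' z) θ) n) := by
      refine ⟨⟨B, fun n θ hθ => hB _ θ (fun z => hdecay1 θ hθ z j) n⟩,
        fun n θ hθ => (aux_Rmat_deriv x _ θ (d2 j θ hθ)).1, fun k => ?_⟩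
      refine ⟨B, fun n θ hθ => ?_⟩
      beta_reduce
      rw [(aux_Rmat_deriv x _ θ (d2 j θ hθ)).2 k]
      exact hB _ θ (fun z => hdecay2 θ hθ z j k) n
    exact hj.congr hU fun n θ hθ => ((aux_Rmat_deriv x kern θ (d1 θ hθ)).2 j).symm
  have hco := fun n θ (hθ : θ ∈ interior Θ) =>
    aux_coercive (Rmat x kern n θ) hcR1 (heigR n θ (interior_subset hθ))
  have hS := hR.inv hU (fun n θ hθ => (hco n θ hθ).1) ⟨1 / cR1, fun n θ hθ => (hco n θ hθ).2.1⟩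
  have hdi := fun n θ (hθ : θ ∈ interior Θ) =>
    aux_diag_inv (Rmat x kern n θ)⁻¹ (a := cR1 / (|B| + 1) ^ 2) (by positivity)
      ((hco n θ hθ).2.2 (|B| + 1) (by positivity)
        ((hB kern θ (hdecay θ (interior_subset hθ)) n).trans
          ((le_abs_self B).trans (by linarith))))
  have hE := (hS.diag hU).inv hU (fun n θ hθ => (hdi n θ hθ).1)
    ⟨_, fun n θ hθ => (hdi n θ hθ).2⟩
  have hG := ((hS.mul hU (hE.mul hU hE)).mul hU hS)
  have := aux_main hU _ hG
  simp only [← pow_two] at this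
  exact this
end
end
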